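/- Let m ≥ 2 and let f ∈ ℤ[x_1,…,x_m] be homogeneous of degree d ≥ 1 and irreducible as an element of ℚ[x_1,…,x_m]. Let G ∈ ℤ[t] with deg G ≥ 1, and let u_1,…,u_m ∈ ℤ[t] with deg u_i ≤ deg G − 1 for each i, such that G divides f(u_1,…,u_m) in ℚ[t] and such that for every irreducible Q ∈ ℚ[t] dividing G there exists j with Q not dividing (∂f/∂x_j)(u_1,…,u_m). Then G(t) divides f(x_1 G(t) + u_1(t), …, x_m G(t) + u_m(t)) in ℚ[x_1,…,x_m,t], and the quotient g(x_1,…,x_m,t) := f(x_1 G(t) + u_1(t), …, x_m G(t) + u_m(t)) / G(t) is irreducible in ℚ[x_1,…,x_m,t]. -/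

import Mathlib

/-!
Write `R = ℚ[t]`, `K = Frac R`, and let `φ` be the substitution `x_i ↦ x_i G + u_i` on `R[x]`.

Since `φ f ≡ f(u) ≡ 0` modulo `G`, there is `g` with `φ f = G g`. Irreducibility of `g` is Gauss's
lemma in two halves.

* Over `K`: `f` is prime in `ℚ[x]`, hence in `ℚ[x][t] = R[x]`, hence (being homogeneous of positive
  degree, it divides no nonzero constant) in the localization `K[x]` (`prime_map_fractionRing`). As
  `G` is invertible in `K`, `φ` becomes an automorphism of `K[x]` (`affineEquiv`), so `φ f`, and
  with it `g`, is irreducible in `K[x]`.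
* Primitivity: let `Q` be an irreducible element of `R` dividing `g`. If `Q ∤ G`, then `φ` is an
  automorphism over the field `R/Q`, so it cannot kill the nonzero polynomial `f`. If `Q ∣ G`,
  cancelling `G` in `∂_j (φ f) = G · φ (∂_j f)` gives `∂_j g = φ (∂_j f)`, and evaluating at `x = 0`
  shows `Q ∣ (∂_j f)(u)` for all `j`, contradicting non-singularity.
-/

noncomputable section

namespace QuotientIrred

open MvPolynomial

variable {σ : Type*}

/-- The affine substitution `x_i ↦ c x_i + v_i` on `R[x]`. -/
def affineHom {R : Type*} [CommRing R] (c : R) (v : σ → R) :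
    MvPolynomial σ R →ₐ[R] MvPolynomial σ R :=
  aeval fun i => X i * C c + C (v i)

/-- The affine substitution `x_i ↦ c x_i + v_i` over a field, for `c ≠ 0`, as an automorphism. -/
def affineEquiv {k : Type*} [Field k] (c : k) (hc : c ≠ 0) (v : σ → k) :
    MvPolynomial σ k ≃ₐ[k] MvPolynomial σ k :=
  AlgEquiv.ofAlgHom (affineHom c v) (affineHom c⁻¹ fun i => -(v i * c⁻¹))
    (by
      ext1 i
      simp only [affineHom, AlgHom.comp_apply, aeval_X, map_add, map_mul, map_neg,
        AlgHom.id_apply, algHom_C, algebraMap_eq]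
      have : (C c * C c⁻¹ : MvPolynomial σ k) = 1 := by rw [← C_mul, mul_inv_cancel₀ hc, C_1]
      linear_combination (X i) * this)
    (by
      ext1 i
      simp only [affineHom, AlgHom.comp_apply, aeval_X, map_add, map_mul, map_neg,
        AlgHom.id_apply, algHom_C, algebraMap_eq]
      have : (C c * C c⁻¹ : MvPolynomial σ k) = 1 := by rw [← C_mul, mul_inv_cancel₀ hc, C_1]
      linear_combination (X i - C (v i)) * this)

lemma affineEquiv_apply {k : Type*} [Field k] (c : k) (hc : c ≠ 0) (v : σ → k)
    (p : MvPolynomial σ k) : affineEquiv c hc v p = affineHom c v p := rfl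

lemma map_affineHom {R S : Type*} [CommRing R] [CommRing S] (q : R →+* S) (c : R) (v : σ → R)
    (p : MvPolynomial σ R) :
    map q (affineHom c v p) = affineHom (q c) (fun i => q (v i)) (map q p) := by
  induction p using MvPolynomial.induction_on with
  | C a => simp [affineHom]
  | add p₁ p₂ h₁ h₂ => simp [h₁, h₂]
  | mul_X p i h => simp only [map_mul, h]; simp [affineHom]

lemma affineHom_zero {R : Type*} [CommRing R] (v : σ → R) (p : MvPolynomial σ R) :
    affineHom 0 v p = C (aeval v p) := by
  induction p using MvPolynomial.induction_on with
  | C a => simp [affineHom]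
  | add p₁ p₂ h₁ h₂ => simp [h₁, h₂]
  | mul_X p i h => simp only [map_mul, h]; simp [affineHom]

/-- The constant term of `p(c x + v)` is `p(v)`. -/
lemma aeval_zero_affineHom {R : Type*} [CommRing R] (c : R) (v : σ → R) (p : MvPolynomial σ R) :
    aeval (fun _ => (0 : R)) (affineHom c v p) = aeval v p := by
  induction p using MvPolynomial.induction_on with
  | C a => simp [affineHom]
  | add p₁ p₂ h₁ h₂ => rw [map_add, map_add, map_add, h₁, h₂]
  | mul_X p i h => simp only [map_mul, h]; simp [affineHom]

/-- The chain rule for an affine substitution. -/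
lemma pderiv_affineHom {R : Type*} [CommRing R] (c : R) (v : σ → R) (j : σ)
    (p : MvPolynomial σ R) :
    pderiv j (affineHom c v p) = C c * affineHom c v (pderiv j p) := by
  classical
  induction p using MvPolynomial.induction_on with
  | C a => simp [affineHom]
  | add p₁ p₂ h₁ h₂ => simp [h₁, h₂, mul_add]
  | mul_X p i h =>
    have hX : pderiv j (affineHom c v (X i)) = C c * affineHom c v (pderiv j (X i)) := by
      by_cases hij : i = j
      · subst hij
        simp [affineHom]
      · simp [affineHom, pderiv_X_of_ne hij]
    rw [map_mul, pderiv_mul, h, hX, pderiv_mul, map_add, map_mul, map_mul]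
    ring

/-- A prime of `k[x]` stays prime in `k[t][x] = k[x][t]`. -/
lemma prime_map_polynomial {k : Type*} [Field k] {f : MvPolynomial σ k} (hf : Prime f) :
    Prime (map (Polynomial.C : k →+* Polynomial k) f) := by
  let e := (optionEquivLeft k σ).symm.trans (optionEquivRight k σ)
  have hleft : ∀ p : MvPolynomial σ k,
      optionEquivLeft k σ (rename some p) = Polynomial.C p := by
    intro p
    induction p using MvPolynomial.induction_on with
    | C a => simp
    | add p₁ p₂ h₁ h₂ => simp only [map_add, h₁, h₂]
    | mul_X p i h => simp only [map_mul, h, rename_X, optionEquivLeft_X_some]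
  have hright : ∀ p : MvPolynomial σ k,
      optionEquivRight k σ (rename some p) = map (Polynomial.C : k →+* Polynomial k) p := by
    intro p
    induction p using MvPolynomial.induction_on with
    | C a => simp
    | add p₁ p₂ h₁ h₂ => simp only [map_add, h₁, h₂]
    | mul_X p i h => simp only [map_mul, h, rename_X, optionEquivRight_X_some, map_X]
  have he : e (Polynomial.C f) = map (Polynomial.C : k →+* Polynomial k) f := by
    simp only [e, AlgEquiv.trans_apply]
    rw [← hleft, AlgEquiv.symm_apply_apply, hright]
  rw [← he]
  exact (MulEquiv.prime_iff e).2 (Polynomial.prime_C_iff.2 hf)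

/-- A prime of `R[x]` which is homogeneous of positive degree stays prime over the fraction field
of `R`. -/
lemma prime_map_fractionRing {R K : Type*} [CommRing R] [IsDomain R] [Field K] [Algebra R K]
    [IsFractionRing R K] {F : MvPolynomial σ R} (hF : Prime F) {d : ℕ} (hd : 1 ≤ d)
    (hhom : F.IsHomogeneous d) : Prime (map (algebraMap R K) F) := by
  let _ : Algebra (MvPolynomial σ R) (MvPolynomial σ K) := algebraMvPolynomial
  have hloc : IsLocalization ((nonZeroDivisors R).map (C (σ := σ))) (MvPolynomial σ K) :=
    inferInstance
  have hP : (Ideal.span {F}).IsPrime := (Ideal.span_singleton_prime hF.ne_zero).2 hF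
  have hdisj : Disjoint (((nonZeroDivisors R).map (C (σ := σ)) : Submonoid _) : Set _)
      (Ideal.span {F} : Set (MvPolynomial σ R)) := by
    rw [Set.disjoint_left]
    rintro _ ⟨r, hr, rfl⟩ hmem
    obtain ⟨h, hh⟩ := Ideal.mem_span_singleton.1 hmem
    have hr0 : (C r : MvPolynomial σ R) ≠ 0 := by
      simpa using nonZeroDivisors.ne_zero hr
    have hh0 : h ≠ 0 := by
      rintro rfl
      exact hr0 (by simpa using hh)
    have := congrArg totalDegree hh
    erw [totalDegree_mul_of_isDomain hF.ne_zero hh0, totalDegree_C,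
      hhom.totalDegree hF.ne_zero] at this
    omega
  have key := IsLocalization.isPrime_of_isPrime_disjoint _ (MvPolynomial σ K) _ hP hdisj
  rw [Ideal.map_span, Set.image_singleton, Ideal.span_singleton_prime] at key
  · exact key
  · rw [MvPolynomial.algebraMap_def]
    exact (map_ne_zero_iff _ (map_injective _ (IsFractionRing.injective R K))).2 hF.ne_zero

/-- Gauss's lemma in the form needed here: a polynomial that is irreducible over the fraction field
and is divisible by no irreducible constant is irreducible. -/
lemma irreducible_of_primitive {R K : Type*} [CommRing R] [IsDomain R]
    [UniqueFactorizationMonoid R] [Field K] [Algebra R K] [IsFractionRing R K]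
    {g : MvPolynomial σ R} (hK : Irreducible (map (algebraMap R K) g))
    (hprim : ∀ Q : R, Irreducible Q → ¬ C Q ∣ g) : Irreducible g := by
  have hinj : Function.Injective (map (σ := σ) (algebraMap R K)) :=
    map_injective _ (IsFractionRing.injective R K)
  have hg0 : g ≠ 0 := by
    rintro rfl
    exact hK.ne_zero (map_zero _)
  have key : ∀ a : MvPolynomial σ R, a ∣ g → IsUnit (map (algebraMap R K) a) → IsUnit a := by
    intro a hag ha
    have hdeg := (isUnit_iff_totalDegree_of_isReduced.1 ha).2
    rw [totalDegree, support_map_of_injective _ (IsFractionRing.injective R K),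
      ← totalDegree] at hdeg
    obtain ⟨r, rfl⟩ : ∃ r, a = C r := ⟨_, totalDegree_eq_zero_iff_eq_C.1 hdeg⟩
    refine IsUnit.map C ?_
    by_contra hr
    have hr0 : r ≠ 0 := by
      rintro rfl
      exact hg0 (by simpa using hag)
    obtain ⟨Q, hQ, hQr⟩ := WfDvdMonoid.exists_irreducible_factor hr hr0
    exact hprim Q hQ ((map_dvd C hQr).trans hag)
  refine ⟨fun h => hK.not_isUnit (h.map _), fun a b hab => ?_⟩
  have := hK.isUnit_or_isUnit (a := map (algebraMap R K) a) (b := map (algebraMap R K) b)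
    (by rw [hab, map_mul])
  exact this.imp (key a ⟨b, hab⟩) (key b ⟨a, by rw [hab, mul_comm]⟩)

end QuotientIrred

open QuotientIrred in
/-- **Lemma `lem: quotient irred`.** If `(u_1,…,u_m)` is a small solution of `f ≡ 0 mod G`
that is non-singular modulo every irreducible factor of `G`, then
`g(x,t) := f(x_1 G(t) + u_1(t), …, x_m G(t) + u_m(t))/G(t)` is a polynomial in
`ℚ[x_1,…,x_m,t]` and it is irreducible. -/
theorem stmt19 (m : ℕ) (hm : 2 ≤ m) (d : ℕ) (hd : 1 ≤ d)
    (f : MvPolynomial (Fin m) ℤ) (hhom : f.IsHomogeneous d)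
    (fQ : MvPolynomial (Fin m) ℚ) (hfQ : fQ = MvPolynomial.map (Int.castRingHom ℚ) f)
    (hirr : Irreducible fQ)
    (G : Polynomial ℤ) (hG : 1 ≤ G.natDegree)
    (GQ : Polynomial ℚ) (hGQ : GQ = G.map (Int.castRingHom ℚ))
    (u : Fin m → Polynomial ℤ) (hu : ∀ i, (u i).natDegree ≤ G.natDegree - 1)
    (uQ : Fin m → Polynomial ℚ) (huQ : ∀ i, uQ i = (u i).map (Int.castRingHom ℚ))
    (hdvd : GQ ∣ MvPolynomial.aeval uQ fQ)
    (hns : ∀ Q : Polynomial ℚ, Irreducible Q → Q ∣ GQ →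
      ∃ j, ¬ Q ∣ MvPolynomial.aeval uQ (MvPolynomial.pderiv j fQ)) :
    ∃ g : MvPolynomial (Fin m) (Polynomial ℚ),
      MvPolynomial.aeval
          (fun i => MvPolynomial.X i * MvPolynomial.C GQ + MvPolynomial.C (uQ i)) fQ
        = MvPolynomial.C GQ * g ∧ Irreducible g := by
  have hG0 : GQ ≠ 0 := by
    rw [hGQ, Polynomial.map_ne_zero_iff (Int.castRingHom ℚ).injective_int]
    rintro rfl
    simp at hG
  -- `F` is `f` with coefficients in `ℚ[t]`, so that all maps below are `ℚ[t]`-linear.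
  set F : MvPolynomial (Fin m) (Polynomial ℚ) :=
    MvPolynomial.map (algebraMap ℚ (Polynomial ℚ)) fQ with hF
  have hFprime : Prime F := prime_map_polynomial hirr.prime
  have hFhom : F.IsHomogeneous d := by
    rw [hF, hfQ]
    exact (hhom.map _).map _
  have hFu : MvPolynomial.aeval uQ F = MvPolynomial.aeval uQ fQ :=
    MvPolynomial.aeval_map_algebraMap _ _ _
  have hφ : MvPolynomial.aeval
      (fun i => MvPolynomial.X i * MvPolynomial.C GQ + MvPolynomial.C (uQ i)) fQ
        = affineHom GQ uQ F :=
    (MvPolynomial.aeval_map_algebraMap _ _ _).symm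
  rw [hφ]
  obtain ⟨g, hg⟩ : MvPolynomial.C GQ ∣ affineHom GQ uQ F := by
    have hker : ∀ r : Polynomial ℚ, Ideal.Quotient.mk (Ideal.span {GQ}) r = 0 ↔ GQ ∣ r := by
      intro r
      rw [Ideal.Quotient.eq_zero_iff_mem, Ideal.mem_span_singleton]
    rw [MvPolynomial.C_dvd_iff_map_hom_eq_zero _ _ hker, map_affineHom, (hker GQ).2 dvd_rfl,
      ← map_zero (Ideal.Quotient.mk (Ideal.span {GQ})), ← map_affineHom, affineHom_zero,
      MvPolynomial.map_C, hFu, (hker _).2 hdvd, map_zero]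
  refine ⟨g, hg, irreducible_of_primitive (K := FractionRing (Polynomial ℚ)) ?_ ?_⟩
  · have hc : algebraMap (Polynomial ℚ) (FractionRing (Polynomial ℚ)) GQ ≠ 0 := by simpa using hG0
    have hprime : Prime (MvPolynomial.map (algebraMap (Polynomial ℚ)
        (FractionRing (Polynomial ℚ))) (affineHom GQ uQ F)) := by
      rw [map_affineHom, ← affineEquiv_apply _ hc]
      exact (MulEquiv.prime_iff (affineEquiv _ hc _)).2 (prime_map_fractionRing hFprime hd hFhom)
    rw [hg, map_mul, MvPolynomial.map_C] at hprime
    exact (irreducible_isUnit_mul ((isUnit_iff_ne_zero.2 hc).map MvPolynomial.C)).1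
      hprime.irreducible
  · intro Q hQ hQg
    by_cases hQG : Q ∣ GQ
    · obtain ⟨j, hj⟩ := hns Q hQ hQG
      apply hj
      have hder : MvPolynomial.pderiv j g = affineHom GQ uQ (MvPolynomial.pderiv j F) := by
        have := congrArg (MvPolynomial.pderiv j) hg
        rw [pderiv_affineHom, MvPolynomial.pderiv_C_mul] at this
        exact (mul_left_cancel₀ (by simpa using hG0) this).symm
      obtain ⟨h, hh⟩ := hQg
      have hval : MvPolynomial.aeval uQ (MvPolynomial.pderiv j fQ)
          = MvPolynomial.aeval uQ (MvPolynomial.pderiv j F) := by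
        rw [hF, MvPolynomial.pderiv_map, MvPolynomial.aeval_map_algebraMap]
      rw [hval, ← aeval_zero_affineHom GQ, ← hder, hh, MvPolynomial.pderiv_C_mul, map_mul,
        MvPolynomial.aeval_C]
      exact dvd_mul_right _ _
    · have hmax : (Ideal.span {Q}).IsMaximal :=
        PrincipalIdealRing.isMaximal_of_irreducible hQ
      let _ := Ideal.Quotient.field (Ideal.span {Q})
      set q := Ideal.Quotient.mk (Ideal.span {Q}) with hq
      have hker : ∀ r : Polynomial ℚ, q r = 0 ↔ Q ∣ r := by
        intro r
        rw [hq, Ideal.Quotient.eq_zero_iff_mem, Ideal.mem_span_singleton]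
      have hc : q GQ ≠ 0 := fun h => hQG ((hker _).1 h)
      have h0 : MvPolynomial.map q (affineHom GQ uQ F) = 0 :=
        (MvPolynomial.C_dvd_iff_map_hom_eq_zero _ _ hker _).1
          (hQg.trans (hg ▸ dvd_mul_left _ _))
      rw [map_affineHom, ← affineEquiv_apply _ hc, EmbeddingLike.map_eq_zero_iff, hF,
        MvPolynomial.map_map] at h0
      -- `ℚ → ℚ[t]/Q` is injective, so the nonzero `f` cannot vanish modulo `Q`.
      exact hirr.ne_zero ((map_eq_zero_iff _
        (MvPolynomial.map_injective _ (RingHom.injective _))).1 h0)
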